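/- Assume the setting of the sub-QMF construction: λ ≥ 2, n ≥ 1, N ≤ λ^n, trigonometric polynomials p_l (with p_l(0) = 1 for l ≤ N, and |p_l|² ≡ 1 for N < l ≤ λ^n) and g_l^{(r)} with 1 − |p_l(ξ)|² = λ^n Σ_{r=1}^{r_l} |g_l^{(r)}(ξ)|², an enumeration ν_1, …, ν_{λ^n} of Λ, τ(ξ) = λ^{−n} Σ_{l=1}^{λ^n} p_l(λξ) e^{i ν_l·ξ}, q_{1,l}^{(r)}(ξ) = τ(ξ)·conj(g_l^{(r)}(λξ)), and q_{2,m}(ξ) = λ^{−n/2}(e^{i ν_m·ξ} − τ(ξ)·conj(p_m(λξ))). Suppose τ has accuracy number a ≥ 1 and flatness number b ≥ 1. Then for each 1 ≤ l ≤ N and 1 ≤ r ≤ r_l, the wavelet mask q_{1,l}^{(r)} has exactly as many vanishing moments as g_l^{(r)}, and each wavelet mask q_{2,m}, 1 ≤ m ≤ λ^n, has at least min{a, b} vanishing moments. -/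

import Mathlib

open MeasureTheory Finset Filter Topology

noncomputable section

/-- `f` is a trigonometric polynomial on ℝⁿ: a finite sum ξ ↦ Σ_{k∈F} h(k) e^{−i k·ξ}. -/
def IsTrigPoly (n : ℕ) (f : (Fin n → ℝ) → ℂ) : Prop :=
  ∃ (F : Finset (Fin n → ℤ)) (h : (Fin n → ℤ) → ℂ),
    ∀ ξ : Fin n → ℝ,
      f ξ = ∑ k ∈ F, h k * Complex.exp (-Complex.I * ∑ i, (k i : ℂ) * (ξ i : ℂ))

/-- Λ = {0,…,λ−1}ⁿ as a finite subset of ℤⁿ. -/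
def Lambda (lam n : ℕ) : Finset (Fin n → ℤ) :=
  Fintype.piFinset fun _ => Finset.Ico (0 : ℤ) (lam : ℤ)

/-- The translate ξ + (2π/λ)·ρ, i.e. ξ + γ for γ = (2π/λ)ρ ∈ Γ. -/
def gshift (lam n : ℕ) (ξ : Fin n → ℝ) (ρ : Fin n → ℤ) : Fin n → ℝ :=
  fun i => ξ i + (2 * Real.pi / lam) * (ρ i : ℝ)

/-- e^{i ν·ξ}. -/
def eI (n : ℕ) (ν : Fin n → ℤ) (ξ : Fin n → ℝ) : ℂ :=
  Complex.exp (Complex.I * ∑ i, (ν i : ℂ) * (ξ i : ℂ))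

/-- The dilate λ·ξ. -/
def dil (lam n : ℕ) (ξ : Fin n → ℝ) : Fin n → ℝ := fun i => (lam : ℝ) * ξ i
/-- The order of the zero of κ at ξ₀: the smallest m such that some m-th order
derivative of κ is nonzero at ξ₀ (junk value 0 if no such m exists). -/
def zeroOrder (n : ℕ) (κ : (Fin n → ℝ) → ℂ) (ξ₀ : Fin n → ℝ) : ℕ :=
  sInf {m : ℕ | iteratedFDeriv ℝ m κ ξ₀ ≠ 0}

/-- The number of vanishing moments of κ: the order of its zero at 0. -/
def vanishingMoments (n : ℕ) (κ : (Fin n → ℝ) → ℂ) : ℕ := zeroOrder n κ 0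

/-- The flatness number of κ: the order of the zero of κ − 1 at 0. -/
def flatnessNumber (n : ℕ) (κ : (Fin n → ℝ) → ℂ) : ℕ :=
  zeroOrder n (fun ξ => κ ξ - 1) 0

/-- The accuracy number of κ: the minimum order of the zeros of κ over Γ∖{0}. -/
def accuracyNumber (lam n : ℕ) (κ : (Fin n → ℝ) → ℂ) : ℕ :=
  sInf {m : ℕ | ∃ ρ ∈ Lambda lam n, ρ ≠ 0 ∧
    iteratedFDeriv ℝ m κ (gshift lam n 0 ρ) ≠ 0}

/-!
Multiplying by a function that is nonzero at `0`, conjugating and dilating all preserve the order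
of a zero at `0`; this settles the masks `q_{1,l}^{(r)}`, since `τ(0) = 1`.

For `q_{2,m}`, orthogonality of characters on `Γ` recovers the polyphase components of `τ`,
`p_m(λξ) = ∑_{γ ∈ Γ} e^{-i ν_m·(ξ+γ)} τ(ξ+γ)`. The terms with `γ ≠ 0` vanish at `ξ = 0` to order
`a`, and the term `γ = 0` differs from `e^{-i ν_m·ξ}` by a function vanishing to order `b`. Hence
`e_m(ξ) = p_m(λξ) - e^{-i ν_m·ξ}` vanishes to order `min a b`, and so does
`e^{i ν_m·ξ} - τ conj(p_m(λ·)) = -(τ - 1) e^{i ν_m·ξ} - τ conj(e_m)`.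
Finally `q_{2,m}` is analytic and nonzero at any zero of `τ`, so its zero at `0` has finite order
and `zeroOrder` does not take its junk value.
-/

open scoped ContDiff ComplexConjugate

section VanishesToOrder

variable {𝕜 E F G A : Type*} [NontriviallyNormedField 𝕜]
  [NormedAddCommGroup E] [NormedSpace 𝕜 E] [NormedAddCommGroup F] [NormedSpace 𝕜 F]
  [NormedAddCommGroup G] [NormedSpace 𝕜 G]

variable (𝕜) in
/-- `f` has a zero of order at least `m` at `x`. Unlike `zeroOrder`, this is meaningful (and
monotone in `m`) also when every derivative of `f` vanishes at `x`. -/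
def VanishesToOrder (m : ℕ) (f : E → F) (x : E) : Prop :=
  ∀ k < m, iteratedFDeriv 𝕜 k f x = 0

lemma vanishesToOrder_one_iff {f : E → F} {x : E} : VanishesToOrder 𝕜 1 f x ↔ f x = 0 := by
  simp only [VanishesToOrder, Nat.lt_one_iff, forall_eq]
  rw [← norm_eq_zero, norm_iteratedFDeriv_zero, norm_eq_zero]

lemma vanishesToOrder_comp_continuousLinearEquiv_iff (e : F ≃L[𝕜] G) {m : ℕ} {f : E → F}
    {x : E} : VanishesToOrder 𝕜 m (fun y ↦ e (f y)) x ↔ VanishesToOrder 𝕜 m f x := by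
  refine forall₂_congr fun k _ ↦ ?_
  rw [show (fun y ↦ e (f y)) = e ∘ f from rfl, e.iteratedFDeriv_comp_left]
  exact (e.continuousMultilinearMapCongrRight fun _ : Fin k ↦ E).map_eq_zero_iff

lemma vanishesToOrder_comp_const_smul_iff {c : 𝕜} (hc : c ≠ 0) {m : ℕ} {f : E → F}
    (hf : ContDiff 𝕜 ∞ f) {x : E} :
    VanishesToOrder 𝕜 m (fun y ↦ f (c • y)) x ↔ VanishesToOrder 𝕜 m f (c • x) := by
  refine forall₂_congr fun k _ ↦ ?_
  rw [iteratedFDeriv_comp_const_smul c (hf.of_le (mod_cast le_top)),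
    smul_eq_zero_iff_right (pow_ne_zero k hc)]

lemma vanishesToOrder_comp_add_right_iff {m : ℕ} {f : E → F} {a x : E} :
    VanishesToOrder 𝕜 m (fun y ↦ f (y + a)) x ↔ VanishesToOrder 𝕜 m f (x + a) := by
  simp only [VanishesToOrder, iteratedFDeriv_comp_add_right]

namespace VanishesToOrder

lemma mono {m m' : ℕ} {f : E → F} {x : E} (h : VanishesToOrder 𝕜 m f x) (hm : m' ≤ m) :
    VanishesToOrder 𝕜 m' f x :=
  fun k hk ↦ h k (hk.trans_le hm)

lemma add {m : ℕ} {f g : E → F} {x : E} (hf : VanishesToOrder 𝕜 m f x)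
    (hg : VanishesToOrder 𝕜 m g x) (hfs : ContDiff 𝕜 ∞ f) (hgs : ContDiff 𝕜 ∞ g) :
    VanishesToOrder 𝕜 m (fun y ↦ f y + g y) x := by
  intro k hk
  rw [fun_iteratedFDeriv_add_apply (hfs.of_le (mod_cast le_top)).contDiffAt
    (hgs.of_le (mod_cast le_top)).contDiffAt, hf k hk, hg k hk, add_zero]

lemma sum {ι : Type*} {s : Finset ι} {m : ℕ} {f : ι → E → F} {x : E}
    (hf : ∀ i ∈ s, VanishesToOrder 𝕜 m (f i) x) (hfs : ∀ i ∈ s, ContDiff 𝕜 ∞ (f i)) :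
    VanishesToOrder 𝕜 m (fun y ↦ ∑ i ∈ s, f i y) x := by
  intro k hk
  rw [iteratedFDeriv_fun_sum_apply fun i hi ↦ ((hfs i hi).of_le (mod_cast le_top)).contDiffAt]
  exact Finset.sum_eq_zero fun i hi ↦ hf i hi k hk

lemma mul [NormedRing A] [NormedAlgebra 𝕜 A] {a b : ℕ} {f g : E → A} {x : E}
    (hf : VanishesToOrder 𝕜 a f x) (hg : VanishesToOrder 𝕜 b g x) (hfs : ContDiff 𝕜 ∞ f)
    (hgs : ContDiff 𝕜 ∞ g) : VanishesToOrder 𝕜 (a + b) (fun y ↦ f y * g y) x := by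
  intro k hk
  rw [← norm_le_zero_iff]
  refine (norm_iteratedFDeriv_mul_le hfs hgs x (mod_cast le_top)).trans_eq
    (Finset.sum_eq_zero fun i hi ↦ ?_)
  have hik : i < k + 1 := Finset.mem_range.1 hi
  obtain hia | hib : i < a ∨ k - i < b := by omega
  · rw [hf i hia, norm_zero, mul_zero, zero_mul]
  · rw [hg _ hib, norm_zero, mul_zero]

lemma mul_left [NormedRing A] [NormedAlgebra 𝕜 A] {m : ℕ} {f g : E → A} {x : E}
    (hg : VanishesToOrder 𝕜 m g x) (hfs : ContDiff 𝕜 ∞ f) (hgs : ContDiff 𝕜 ∞ g) :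
    VanishesToOrder 𝕜 m (fun y ↦ f y * g y) x := by
  have hf : VanishesToOrder 𝕜 0 f x := fun k hk ↦ absurd hk k.not_lt_zero
  simpa only [zero_add] using hf.mul hg hfs hgs

end VanishesToOrder

lemma vanishesToOrder_mul_iff_right [NormedDivisionRing A] [NormedAlgebra 𝕜 A] {m : ℕ}
    {t f : E → A} {x : E} (ht : t x ≠ 0) (hts : ContDiff 𝕜 ∞ t) (hfs : ContDiff 𝕜 ∞ f) :
    VanishesToOrder 𝕜 m (fun y ↦ t y * f y) x ↔ VanishesToOrder 𝕜 m f x := by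
  refine ⟨fun h ↦ ?_, fun h ↦ h.mul_left hts hfs⟩
  induction m with
  | zero => exact fun k hk ↦ absurd hk k.not_lt_zero
  | succ m ih =>
    -- `t - t x` gains one order, and `t x * f = t * f - (t - t x) * f`.
    have ht₁ : VanishesToOrder 𝕜 1 (fun y ↦ t x - t y) x :=
      vanishesToOrder_one_iff.2 (sub_self _)
    have hts' : ContDiff 𝕜 ∞ fun y ↦ t x - t y := contDiff_const.sub hts
    have hdiff : VanishesToOrder 𝕜 (m + 1) (fun y ↦ (t x - t y) * f y) x :=
      add_comm 1 m ▸ ht₁.mul (ih (h.mono m.le_succ)) hts' hfs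
    have hsum := (h.add hdiff (hts.mul hfs) (hts'.mul hfs)).mul_left
      (f := fun _ ↦ (t x)⁻¹) contDiff_const ((hts.mul hfs).add (hts'.mul hfs))
    convert! hsum using 2 with y
    rw [← add_mul, add_sub_cancel, inv_mul_cancel_left₀ ht]

lemma exists_iteratedFDeriv_ne_zero [CharZero 𝕜] [PreconnectedSpace E] [CompleteSpace F]
    {f : E → F} (hf : AnalyticOnNhd 𝕜 f Set.univ) (hf₀ : f ≠ 0) (x : E) :
    ∃ k, iteratedFDeriv 𝕜 k f x ≠ 0 := by
  by_contra! hflat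
  obtain ⟨q, r, hq⟩ := hf x (Set.mem_univ x)
  refine hf₀ (hf.eq_of_eventuallyEq analyticOnNhd_const (z₀ := x) ?_)
  filter_upwards [Metric.eball_mem_nhds x hq.r_pos] with y hy
  have hTaylor := hq.hasSum_iteratedFDeriv (y := y - x) (by simpa [edist_eq_enorm_sub] using hy)
  simp only [hflat, zero_apply, smul_zero, add_sub_cancel] at hTaylor
  exact hTaylor.unique hasSum_zero

end VanishesToOrder

section ZeroOrder

variable {lam n : ℕ} {κ : (Fin n → ℝ) → ℂ} {x : Fin n → ℝ}

lemma vanishesToOrder_zeroOrder : VanishesToOrder ℝ (zeroOrder n κ x) κ x :=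
  fun _ hk ↦ not_not.1 (Nat.notMem_of_lt_sInf hk)

lemma vanishesToOrder_flatnessNumber :
    VanishesToOrder ℝ (flatnessNumber n κ) (fun ξ ↦ κ ξ - 1) 0 :=
  vanishesToOrder_zeroOrder

lemma vanishesToOrder_accuracyNumber {ρ : Fin n → ℤ} (hρ : ρ ∈ Lambda lam n) (hρ₀ : ρ ≠ 0) :
    VanishesToOrder ℝ (accuracyNumber lam n κ) κ (gshift lam n 0 ρ) :=
  fun _ hk ↦ not_not.1 fun hne ↦ Nat.notMem_of_lt_sInf hk ⟨ρ, hρ, hρ₀, hne⟩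

lemma eq_one_of_flatnessNumber_pos (h : 0 < flatnessNumber n κ) : κ 0 = 1 := by
  have h₁ : VanishesToOrder ℝ 1 (fun ξ ↦ κ ξ - 1) 0 := vanishesToOrder_flatnessNumber.mono h
  rw [vanishesToOrder_one_iff] at h₁
  exact sub_eq_zero.1 h₁

lemma exists_gshift_eq_zero_of_accuracyNumber_pos (h : 0 < accuracyNumber lam n κ) :
    ∃ ρ : Fin n → ℤ, κ (gshift lam n 0 ρ) = 0 := by
  obtain ⟨_, ρ, hρ, hρ₀, _⟩ := Nat.nonempty_of_pos_sInf h
  exact ⟨ρ, vanishesToOrder_one_iff.1 ((vanishesToOrder_accuracyNumber hρ hρ₀).mono h)⟩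

lemma le_zeroOrder {m : ℕ} (hκ : ContDiff ℝ ω κ) (hκ₀ : κ ≠ 0) (h : VanishesToOrder ℝ m κ x) :
    m ≤ zeroOrder n κ x := by
  by_contra! hlt
  exact Nat.sInf_mem (exists_iteratedFDeriv_ne_zero hκ.analyticOnNhd hκ₀ x) (h _ hlt)

lemma zeroOrder_eq_sInf_not_vanishesToOrder :
    zeroOrder n κ x = sInf {m | ¬ VanishesToOrder ℝ (m + 1) κ x} := by
  have hsub : {m | iteratedFDeriv ℝ m κ x ≠ 0} ⊆ {m | ¬ VanishesToOrder ℝ (m + 1) κ x} :=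
    fun m hm h ↦ hm (h m m.lt_succ_self)
  obtain hempty | hne := {m | iteratedFDeriv ℝ m κ x ≠ 0}.eq_empty_or_nonempty
  · have hflat (m : ℕ) : VanishesToOrder ℝ m κ x :=
      fun k _ ↦ not_not.1 fun hk ↦ hempty.subset hk
    simp only [zeroOrder, hempty, hflat, not_true_eq_false, Set.ofPred_false]
  · refine le_antisymm (le_csInf (hne.mono hsub) fun m hm ↦ ?_) (csInf_le_csInf' hne hsub)
    by_contra! hlt
    exact hm (vanishesToOrder_zeroOrder.mono hlt)

lemma zeroOrder_congr {κ' : (Fin n → ℝ) → ℂ} {x' : Fin n → ℝ}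
    (h : ∀ m, VanishesToOrder ℝ m κ x ↔ VanishesToOrder ℝ m κ' x') :
    zeroOrder n κ x = zeroOrder n κ' x' := by
  simp only [zeroOrder_eq_sInf_not_vanishesToOrder, h]

end ZeroOrder

section Lattice

variable {lam n : ℕ}

lemma gshift_eq_add (ξ : Fin n → ℝ) (ρ : Fin n → ℤ) :
    gshift lam n ξ ρ = ξ + gshift lam n 0 ρ := by
  ext i
  simp only [gshift, Pi.add_apply, Pi.zero_apply, zero_add]

lemma vanishesToOrder_comp_gshift_iff {m : ℕ} {f : (Fin n → ℝ) → ℂ} {ρ : Fin n → ℤ} :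
    VanishesToOrder ℝ m (fun ξ ↦ f (gshift lam n ξ ρ)) 0 ↔
      VanishesToOrder ℝ m f (gshift lam n 0 ρ) := by
  rw [funext fun ξ ↦ congrArg f (gshift_eq_add ξ ρ), vanishesToOrder_comp_add_right_iff, zero_add]

lemma contDiff_comp_gshift {m : WithTop ℕ∞} {f : (Fin n → ℝ) → ℂ} (hf : ContDiff ℝ m f)
    (ρ : Fin n → ℤ) : ContDiff ℝ m fun ξ ↦ f (gshift lam n ξ ρ) := by
  rw [funext fun ξ ↦ congrArg f (gshift_eq_add ξ ρ)]
  exact hf.comp (contDiff_id.add contDiff_const)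

lemma gshift_zero_right (ξ : Fin n → ℝ) : gshift lam n ξ 0 = ξ := by
  ext i
  simp only [gshift, Pi.zero_apply, Int.cast_zero, mul_zero, add_zero]

lemma dil_gshift (hlam : lam ≠ 0) (ξ : Fin n → ℝ) (ρ : Fin n → ℤ) :
    dil lam n (gshift lam n ξ ρ) = dil lam n ξ + fun i ↦ 2 * Real.pi * ρ i := by
  ext i
  simp only [dil, gshift, Pi.add_apply]
  field_simp

lemma zero_mem_Lambda (hlam : lam ≠ 0) : (0 : Fin n → ℤ) ∈ Lambda lam n := by
  simpa [Lambda] using fun _ ↦ Nat.pos_of_ne_zero hlam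

lemma injOn_intCast_Lambda :
    Set.InjOn (fun (ρ : Fin n → ℤ) i ↦ (ρ i : ZMod lam)) (Lambda lam n) := by
  intro ρ hρ σ hσ h
  simp only [Lambda, Fintype.coe_piFinset, Set.mem_univ_pi, Finset.coe_Ico, Set.mem_Ico] at hρ hσ
  ext i
  have hmod := (ZMod.intCast_eq_intCast_iff' (ρ i) (σ i) lam).1 (congrFun h i)
  rwa [Int.emod_eq_of_lt (hρ i).1 (hρ i).2, Int.emod_eq_of_lt (hσ i).1 (hσ i).2] at hmod

end Lattice

section Exponentials

variable {lam n : ℕ}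

lemma eI_zero (ξ : Fin n → ℝ) : eI n 0 ξ = 1 := by
  simp [eI]

lemma eI_ne_zero (k : Fin n → ℤ) (ξ : Fin n → ℝ) : eI n k ξ ≠ 0 :=
  Complex.exp_ne_zero _

lemma eI_add_left (k l : Fin n → ℤ) (ξ : Fin n → ℝ) :
    eI n (k + l) ξ = eI n k ξ * eI n l ξ := by
  simp [eI, ← Complex.exp_add, ← mul_add, ← add_mul, ← Finset.sum_add_distrib]

lemma eI_add_right (k : Fin n → ℤ) (ξ η : Fin n → ℝ) :
    eI n k (ξ + η) = eI n k ξ * eI n k η := by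
  simp [eI, ← Complex.exp_add, ← mul_add, ← Finset.sum_add_distrib]

lemma conj_eI (k : Fin n → ℤ) (ξ : Fin n → ℝ) : conj (eI n k ξ) = eI n (-k) ξ := by
  simp [eI, ← Complex.exp_conj]

lemma periodic_eI (k ρ : Fin n → ℤ) : Function.Periodic (eI n k) fun i ↦ 2 * Real.pi * ρ i := by
  intro ξ
  suffices h : eI n k (fun i ↦ 2 * Real.pi * ρ i) = 1 by rw [eI_add_right, h, mul_one]
  rw [eI, Complex.exp_eq_one_iff]
  refine ⟨∑ i, k i * ρ i, ?_⟩
  push_cast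
  rw [Finset.mul_sum, Finset.sum_mul]
  exact Finset.sum_congr rfl fun i _ ↦ by ring

lemma contDiff_eI (k : Fin n → ℤ) : ContDiff ℝ ω (eI n k) :=
  (contDiff_const.mul (ContDiff.sum fun i _ ↦
    contDiff_const.mul (Complex.ofRealCLM.contDiff.comp (contDiff_apply ℝ ℝ i)))).cexp

lemma IsTrigPoly.exists_eq_sum_eI {f : (Fin n → ℝ) → ℂ} (hf : IsTrigPoly n f) :
    ∃ (F : Finset (Fin n → ℤ)) (h : (Fin n → ℤ) → ℂ), f = fun ξ ↦ ∑ k ∈ F, h k * eI n (-k) ξ := by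
  obtain ⟨F, h, hf⟩ := hf
  exact ⟨F, h, funext fun ξ ↦ by simp [hf, eI]⟩

lemma IsTrigPoly.contDiff {f : (Fin n → ℝ) → ℂ} (hf : IsTrigPoly n f) : ContDiff ℝ ω f := by
  obtain ⟨F, h, rfl⟩ := hf.exists_eq_sum_eI
  exact ContDiff.sum fun k _ ↦ contDiff_const.mul (contDiff_eI _)

lemma IsTrigPoly.periodic {f : (Fin n → ℝ) → ℂ} (hf : IsTrigPoly n f) (ρ : Fin n → ℤ) :
    Function.Periodic f fun i ↦ 2 * Real.pi * ρ i := by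
  obtain ⟨F, h, rfl⟩ := hf.exists_eq_sum_eI
  exact fun ξ ↦ Finset.sum_congr rfl fun k _ ↦ by rw [periodic_eI (-k) ρ ξ]

lemma sum_zpow_mul_of_isPrimitiveRoot {K : Type*} [Field K] {ζ : K} (hζ : IsPrimitiveRoot ζ lam)
    (k : ℤ) :
    ∑ j ∈ Finset.Ico (0 : ℤ) lam, ζ ^ (k * j) = if (lam : ℤ) ∣ k then (lam : K) else 0 := by
  have hrange : ∑ j ∈ Finset.Ico (0 : ℤ) lam, ζ ^ (k * j) =
      ∑ j ∈ Finset.range lam, (ζ ^ k) ^ j := by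
    refine (Finset.sum_nbij' Nat.cast Int.toNat ?_ ?_ ?_ ?_ ?_).symm <;> intro j hj
    · simpa using hj
    · simp only [Finset.mem_Ico, Finset.mem_range] at hj ⊢
      omega
    · exact Int.toNat_natCast j
    · exact Int.toNat_of_nonneg (Finset.mem_Ico.1 hj).1
    · rw [zpow_mul, zpow_natCast]
  rw [hrange]
  split_ifs with hk
  · simp [(hζ.zpow_eq_one_iff_dvd k).2 hk]
  · have hpow : (ζ ^ k) ^ lam = 1 := by
      rw [← zpow_natCast, zpow_comm, zpow_natCast, hζ.pow_eq_one, one_zpow]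
    have hne : ζ ^ k - 1 ≠ 0 := sub_ne_zero.2 fun h ↦ hk ((hζ.zpow_eq_one_iff_dvd k).1 h)
    refine (mul_eq_zero.1 ?_).resolve_right hne
    rw [geom_sum_mul, hpow, sub_self]

lemma eI_gshift_zero (k ρ : Fin n → ℤ) :
    eI n k (gshift lam n 0 ρ) =
      ∏ i, Complex.exp (2 * Real.pi * Complex.I / lam) ^ (k i * ρ i) := by
  simp only [eI, ← Complex.exp_int_mul, ← Complex.exp_sum, Finset.mul_sum]
  congr 1
  refine Finset.sum_congr rfl fun i _ ↦ ?_
  simp only [gshift, Pi.zero_apply]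
  push_cast
  ring

lemma sum_eI_gshift_zero (hlam : lam ≠ 0) (k : Fin n → ℤ) :
    ∑ ρ ∈ Lambda lam n, eI n k (gshift lam n 0 ρ) =
      if ∀ i, (lam : ℤ) ∣ k i then (lam : ℂ) ^ n else 0 := by
  simp only [eI_gshift_zero, Lambda,
    ← Finset.prod_univ_sum (fun _ : Fin n ↦ Finset.Ico (0 : ℤ) lam)
      (fun i j ↦ Complex.exp (2 * Real.pi * Complex.I / lam) ^ (k i * j)),
    sum_zpow_mul_of_isPrimitiveRoot (Complex.isPrimitiveRoot_exp lam hlam)]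
  simp [Finset.prod_ite_zero]

end Exponentials

section Masks

variable {lam n : ℕ} {ι : Type*}

lemma contDiff_comp_dil {m : WithTop ℕ∞} {f : (Fin n → ℝ) → ℂ} (hf : ContDiff ℝ m f) :
    ContDiff ℝ m fun ξ ↦ f (dil lam n ξ) :=
  hf.comp (contDiff_const_smul (lam : ℝ))

lemma contDiff_conj {m : WithTop ℕ∞} {f : (Fin n → ℝ) → ℂ} (hf : ContDiff ℝ m f) :
    ContDiff ℝ m fun ξ ↦ conj (f ξ) :=
  Complex.conjCLE.contDiff.comp hf

theorem vanishingMoments_mul_conj_dil (hlam : lam ≠ 0) {t f : (Fin n → ℝ) → ℂ} (ht : t 0 ≠ 0)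
    (hts : ContDiff ℝ ∞ t) (hfs : ContDiff ℝ ∞ f) :
    vanishingMoments n (fun ξ ↦ t ξ * conj (f (dil lam n ξ))) = vanishingMoments n f :=
  zeroOrder_congr fun m ↦ calc
    VanishesToOrder ℝ m (fun ξ ↦ t ξ * conj (f (dil lam n ξ))) 0
      ↔ VanishesToOrder ℝ m (fun ξ ↦ conj (f (dil lam n ξ))) 0 :=
        vanishesToOrder_mul_iff_right ht hts (contDiff_conj (contDiff_comp_dil hfs))
    _ ↔ VanishesToOrder ℝ m (fun ξ ↦ f ((lam : ℝ) • ξ)) 0 :=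
        vanishesToOrder_comp_continuousLinearEquiv_iff Complex.conjCLE
    _ ↔ VanishesToOrder ℝ m f ((lam : ℝ) • 0) :=
        vanishesToOrder_comp_const_smul_iff (Nat.cast_ne_zero.2 hlam) hfs
    _ ↔ VanishesToOrder ℝ m f 0 := by rw [smul_zero]

variable [Fintype ι]

/-- The mask `τ(ξ) = λ⁻ⁿ ∑ₗ pₗ(λξ) e^{i νₗ·ξ}` with polyphase components `pₗ` at the
digits `νₗ`. -/
def polyphaseMask (lam : ℕ) (p : ι → (Fin n → ℝ) → ℂ) (ν : ι → Fin n → ℤ) (ξ : Fin n → ℝ) : ℂ :=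
  ((lam : ℂ) ^ n)⁻¹ * ∑ l, p l (dil lam n ξ) * eI n (ν l) ξ

variable {p : ι → (Fin n → ℝ) → ℂ} {ν : ι → Fin n → ℤ}

lemma contDiff_polyphaseMask {m : WithTop ℕ∞} (hp : ∀ l, ContDiff ℝ m (p l)) :
    ContDiff ℝ m (polyphaseMask lam p ν) :=
  contDiff_const.mul (ContDiff.sum fun l _ ↦
    (contDiff_comp_dil (hp l)).mul ((contDiff_eI (ν l)).of_le le_top))

lemma polyphaseMask_gshift (hlam : lam ≠ 0)
    (hper : ∀ l (k : Fin n → ℤ), Function.Periodic (p l) fun i ↦ 2 * Real.pi * k i)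
    (ξ : Fin n → ℝ) (ρ : Fin n → ℤ) :
    polyphaseMask lam p ν (gshift lam n ξ ρ) =
      ((lam : ℂ) ^ n)⁻¹ *
        ∑ l, p l (dil lam n ξ) * (eI n (ν l) ξ * eI n (ν l) (gshift lam n 0 ρ)) := by
  simp only [polyphaseMask, dil_gshift hlam, hper _ ρ (dil lam n ξ)]
  simp only [gshift_eq_add ξ ρ, eI_add_right]

lemma sum_polyphaseMask_gshift_mul_eI (hlam : lam ≠ 0)
    (hper : ∀ l (k : Fin n → ℤ), Function.Periodic (p l) fun i ↦ 2 * Real.pi * k i)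
    (hν : Function.Injective fun l i ↦ (ν l i : ZMod lam)) (m : ι) (ξ : Fin n → ℝ) :
    ∑ ρ ∈ Lambda lam n, eI n (-ν m) (gshift lam n ξ ρ) * polyphaseMask lam p ν (gshift lam n ξ ρ) =
      p m (dil lam n ξ) := by
  classical
  have hdvd (l : ι) : (∀ i, (lam : ℤ) ∣ (ν l - ν m) i) ↔ m = l := by
    simp only [Pi.sub_apply, ← ZMod.intCast_eq_intCast_iff_dvd_sub, ← hν.eq_iff, funext_iff]
  have hterm (ρ : Fin n → ℤ) :
      eI n (-ν m) (gshift lam n ξ ρ) * polyphaseMask lam p ν (gshift lam n ξ ρ) =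
        ∑ l, ((lam : ℂ) ^ n)⁻¹ * (p l (dil lam n ξ) * eI n (ν l - ν m) ξ) *
          eI n (ν l - ν m) (gshift lam n 0 ρ) := by
    rw [polyphaseMask_gshift hlam hper, Finset.mul_sum, Finset.mul_sum]
    refine Finset.sum_congr rfl fun l _ ↦ ?_
    rw [gshift_eq_add ξ ρ, eI_add_right, sub_eq_add_neg, eI_add_left, eI_add_left]
    ring
  simp only [hterm]
  rw [Finset.sum_comm]
  simp only [← Finset.mul_sum, sum_eI_gshift_zero hlam, hdvd, mul_ite, mul_zero,
    Finset.sum_ite_eq, Finset.mem_univ, if_true, sub_self, eI_zero]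
  field_simp

lemma vanishesToOrder_polyphase_sub_eI (hlam : lam ≠ 0) (hp : ∀ l, ContDiff ℝ ∞ (p l))
    (hper : ∀ l (k : Fin n → ℤ), Function.Periodic (p l) fun i ↦ 2 * Real.pi * k i)
    (hν : Function.Injective fun l i ↦ (ν l i : ZMod lam)) (m : ι) :
    VanishesToOrder ℝ (min (accuracyNumber lam n (polyphaseMask lam p ν))
        (flatnessNumber n (polyphaseMask lam p ν)))
      (fun ξ ↦ p m (dil lam n ξ) - eI n (-ν m) ξ) 0 := by
  set τ := polyphaseMask lam p ν
  have hτs : ContDiff ℝ ∞ τ := contDiff_polyphaseMask hp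
  have hes : ContDiff ℝ ∞ (eI n (-ν m)) := (contDiff_eI _).of_le le_top
  have hflat := (vanishesToOrder_flatnessNumber (κ := τ)).mono
    (min_le_right (accuracyNumber lam n τ) (flatnessNumber n τ))
  have hmul : ContDiff ℝ ∞ fun ξ ↦ eI n (-ν m) ξ * τ ξ := hes.mul hτs
  have hacc : ∀ ρ ∈ (Lambda lam n).erase 0, VanishesToOrder ℝ
      (min (accuracyNumber lam n τ) (flatnessNumber n τ))
      (fun ξ ↦ eI n (-ν m) (gshift lam n ξ ρ) * τ (gshift lam n ξ ρ)) 0 := fun ρ hρ ↦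
    vanishesToOrder_comp_gshift_iff.2 (((vanishesToOrder_accuracyNumber
      (Finset.mem_of_mem_erase hρ) (Finset.ne_of_mem_erase hρ)).mono
        (min_le_left _ _)).mul_left hes hτs)
  have hsum := (hflat.mul_left hes (hτs.sub contDiff_const)).add
    (VanishesToOrder.sum hacc fun ρ _ ↦ contDiff_comp_gshift hmul ρ)
    (hes.mul (hτs.sub contDiff_const)) (ContDiff.sum fun ρ _ ↦ contDiff_comp_gshift hmul ρ)
  convert! hsum using 1
  ext ξ
  rw [← sum_polyphaseMask_gshift_mul_eI hlam hper hν m ξ,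
    ← Finset.add_sum_erase _ _ (zero_mem_Lambda hlam), gshift_zero_right]
  ring

/-- The wavelet mask `q_{2,m}(ξ) = λ^{-n/2} (e^{i ν_m·ξ} - τ(ξ) conj(p_m(λξ)))`, where `τ` is
`polyphaseMask lam p ν`. -/
def residualMask (lam : ℕ) (p : ι → (Fin n → ℝ) → ℂ) (ν : ι → Fin n → ℤ) (m : ι)
    (ξ : Fin n → ℝ) : ℂ :=
  ((Real.sqrt ((lam : ℝ) ^ n))⁻¹ : ℂ) *
    (eI n (ν m) ξ - polyphaseMask lam p ν ξ * conj (p m (dil lam n ξ)))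

lemma contDiff_residualMask (hp : ∀ l, ContDiff ℝ ω (p l)) (m : ι) :
    ContDiff ℝ ω (residualMask lam p ν m) :=
  contDiff_const.mul ((contDiff_eI _).sub
    ((contDiff_polyphaseMask hp).mul (contDiff_conj (contDiff_comp_dil (hp m)))))

lemma residualMask_ne_zero (hlam : lam ≠ 0) (m : ι) {ξ : Fin n → ℝ}
    (hξ : polyphaseMask lam p ν ξ = 0) : residualMask lam p ν m ≠ 0 := by
  refine Function.ne_iff.2 ⟨ξ, ?_⟩
  rw [residualMask, hξ, zero_mul, sub_zero]
  have hsqrt : Real.sqrt ((lam : ℝ) ^ n) ≠ 0 := by positivity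
  exact mul_ne_zero (inv_ne_zero (Complex.ofReal_ne_zero.2 hsqrt)) (eI_ne_zero _ _)

lemma vanishesToOrder_residualMask (hlam : lam ≠ 0) (hp : ∀ l, ContDiff ℝ ∞ (p l))
    (hper : ∀ l (k : Fin n → ℤ), Function.Periodic (p l) fun i ↦ 2 * Real.pi * k i)
    (hν : Function.Injective fun l i ↦ (ν l i : ZMod lam)) (m : ι) :
    VanishesToOrder ℝ (min (accuracyNumber lam n (polyphaseMask lam p ν))
        (flatnessNumber n (polyphaseMask lam p ν))) (residualMask lam p ν m) 0 := by
  set τ := polyphaseMask lam p ν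
  have hτs : ContDiff ℝ ∞ τ := contDiff_polyphaseMask hp
  have hes (k : Fin n → ℤ) : ContDiff ℝ ∞ (eI n k) := (contDiff_eI k).of_le le_top
  have hflat := (vanishesToOrder_flatnessNumber (κ := τ)).mono
    (min_le_right (accuracyNumber lam n τ) (flatnessNumber n τ))
  have hτ₁s : ContDiff ℝ ∞ fun ξ ↦ τ ξ - 1 := hτs.sub contDiff_const
  have hpolys : ContDiff ℝ ∞ fun ξ ↦ conj (p m (dil lam n ξ) - eI n (-ν m) ξ) :=
    contDiff_conj ((contDiff_comp_dil (hp m)).sub (hes _))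
  have hpoly := (vanishesToOrder_comp_continuousLinearEquiv_iff Complex.conjCLE).2
    (vanishesToOrder_polyphase_sub_eI hlam hp hper hν m)
  have hsum := ((hflat.mul_left (hes (ν m)) hτ₁s).add (hpoly.mul_left hτs hpolys)
    ((hes (ν m)).mul hτ₁s) (hτs.mul hpolys)).mul_left
      (f := fun _ ↦ -((Real.sqrt ((lam : ℝ) ^ n))⁻¹ : ℂ)) contDiff_const
      (((hes (ν m)).mul hτ₁s).add (hτs.mul hpolys))
  convert! hsum using 1
  ext ξ
  simp only [residualMask, Complex.conjCLE_apply, map_sub, conj_eI, neg_neg]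
  ring

theorem min_le_vanishingMoments_residualMask (hlam : lam ≠ 0) (hp : ∀ l, ContDiff ℝ ω (p l))
    (hper : ∀ l (k : Fin n → ℤ), Function.Periodic (p l) fun i ↦ 2 * Real.pi * k i)
    (hν : Function.Injective fun l i ↦ (ν l i : ZMod lam))
    (hacc : 0 < accuracyNumber lam n (polyphaseMask lam p ν)) (m : ι) :
    min (accuracyNumber lam n (polyphaseMask lam p ν))
        (flatnessNumber n (polyphaseMask lam p ν)) ≤
      vanishingMoments n (residualMask lam p ν m) := by
  obtain ⟨ρ, hρ⟩ := exists_gshift_eq_zero_of_accuracyNumber_pos hacc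
  exact le_zeroOrder (contDiff_residualMask hp m) (residualMask_ne_zero hlam m hρ)
    (vanishesToOrder_residualMask hlam (fun l ↦ (hp l).of_le le_top) hper hν m)

end Masks

theorem vanishing_moments_subQMF_general {lam n : ℕ} (hlam : lam ≠ 0) {ι : Type*} [Fintype ι]
    {J : ι → Type*} {p : ι → (Fin n → ℝ) → ℂ} {g : (l : ι) → J l → (Fin n → ℝ) → ℂ}
    (hp : ∀ l, ContDiff ℝ ω (p l))
    (hper : ∀ l (k : Fin n → ℤ), Function.Periodic (p l) fun i ↦ 2 * Real.pi * k i)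
    (hg : ∀ l r, ContDiff ℝ ∞ (g l r))
    {ν : ι → Fin n → ℤ} (hν : Function.Injective fun l i ↦ (ν l i : ZMod lam))
    {τ : (Fin n → ℝ) → ℂ}
    (hτ : ∀ ξ, τ ξ = ((lam : ℂ) ^ n)⁻¹ * ∑ l, p l (dil lam n ξ) * eI n (ν l) ξ)
    (hτ₀ : τ 0 ≠ 0)
    {q1 : (l : ι) → J l → (Fin n → ℝ) → ℂ}
    (hq1 : ∀ l r ξ, q1 l r ξ = τ ξ * conj (g l r (dil lam n ξ)))
    {q2 : ι → (Fin n → ℝ) → ℂ}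
    (hq2 : ∀ m ξ, q2 m ξ = ((Real.sqrt ((lam : ℝ) ^ n))⁻¹ : ℂ) *
      (eI n (ν m) ξ - τ ξ * conj (p m (dil lam n ξ)))) :
    (∀ l r, vanishingMoments n (q1 l r) = vanishingMoments n (g l r)) ∧
      (0 < accuracyNumber lam n τ →
        ∀ m, min (accuracyNumber lam n τ) (flatnessNumber n τ) ≤ vanishingMoments n (q2 m)) := by
  obtain rfl : τ = polyphaseMask lam p ν := funext hτ
  obtain rfl : q2 = residualMask lam p ν := funext₂ hq2
  refine ⟨fun l r ↦ ?_, min_le_vanishingMoments_residualMask hlam hp hper hν⟩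
  rw [funext (hq1 l r)]
  exact vanishingMoments_mul_conj_dil hlam hτ₀
    (contDiff_polyphaseMask fun l ↦ (hp l).of_le le_top) (hg l r)

/-- vanishing moments in the sub-QMF shared-responsibility construction:
each q_{1,l}^{(r)} has exactly as many vanishing moments as g_l^{(r)}, and each q_{2,m}
has at least min{a,b} vanishing moments, where a is the accuracy number and b the
flatness number of τ. -/
theorem vanishing_moments_subQMF (lam n N : ℕ) (hlam : 2 ≤ lam) (hn : 1 ≤ n)
    (hN : N ≤ lam ^ n)
    (p : Fin (lam ^ n) → (Fin n → ℝ) → ℂ)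
    (R : Fin (lam ^ n) → ℕ)
    (g : (l : Fin (lam ^ n)) → Fin (R l) → (Fin n → ℝ) → ℂ)
    (hp : ∀ l, IsTrigPoly n (p l))
    (hg : ∀ l (r : Fin (R l)), IsTrigPoly n (g l r))
    (hpg : ∀ l : Fin (lam ^ n), (l : ℕ) < N →
      ∀ ξ, 1 - ‖p l ξ‖ ^ 2 = (lam : ℝ) ^ n * ∑ r, ‖g l r ξ‖ ^ 2)
    (hp0 : ∀ l : Fin (lam ^ n), (l : ℕ) < N → p l 0 = 1)
    (hp1 : ∀ l : Fin (lam ^ n), N ≤ (l : ℕ) → ∀ ξ, ‖p l ξ‖ ^ 2 = 1)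
    (ν : Fin (lam ^ n) → Fin n → ℤ)
    (hν_inj : Function.Injective ν) (hν_mem : ∀ l, ν l ∈ Lambda lam n)
    (hν_surj : ∀ ρ ∈ Lambda lam n, ∃ l, ν l = ρ)
    (τ : (Fin n → ℝ) → ℂ)
    (hτ : ∀ ξ, τ ξ = ((lam : ℂ) ^ n)⁻¹ * ∑ l, p l (dil lam n ξ) * eI n (ν l) ξ)
    (q1 : (l : Fin (lam ^ n)) → Fin (R l) → (Fin n → ℝ) → ℂ)
    (hq1 : ∀ l (r : Fin (R l)) ξ,
      q1 l r ξ = τ ξ * (starRingEnd ℂ) (g l r (dil lam n ξ)))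
    (q2 : Fin (lam ^ n) → (Fin n → ℝ) → ℂ)
    (hq2 : ∀ m ξ, q2 m ξ = ((Real.sqrt ((lam : ℝ) ^ n))⁻¹ : ℂ) *
      (eI n (ν m) ξ - τ ξ * (starRingEnd ℂ) (p m (dil lam n ξ))))
    (a b : ℕ) (ha : accuracyNumber lam n τ = a) (ha1 : 1 ≤ a)
    (hb : flatnessNumber n τ = b) (hb1 : 1 ≤ b) :
    (∀ l : Fin (lam ^ n), (l : ℕ) < N → ∀ r : Fin (R l),
      vanishingMoments n (q1 l r) = vanishingMoments n (g l r)) ∧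
    (∀ m : Fin (lam ^ n), min a b ≤ vanishingMoments n (q2 m)) := by
  subst ha hb
  obtain ⟨hq1_eq, hq2_le⟩ := vanishing_moments_subQMF_general (by omega : lam ≠ 0)
    (fun l ↦ (hp l).contDiff) (fun l ↦ (hp l).periodic) (fun l r ↦ (hg l r).contDiff.of_le le_top)
    (fun l m h ↦ hν_inj (injOn_intCast_Lambda (hν_mem l) (hν_mem m) h)) hτ
    (eq_one_of_flatnessNumber_pos hb1 ▸ one_ne_zero) hq1 hq2
  exact ⟨fun l _ ↦ hq1_eq l, hq2_le ha1⟩
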